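/- arXiv:1308.2594 — 5 statements merged into one kernel-verified Lean document; each statement's English description precedes it below -/
import Mathlib

section
/- Let ω₀ ∈ ℂ with Re ω₀ > 0 and Im ω₀ > 0, and let m ∈ ℝ with m ≠ 0 and 1 + m > 0. Then there exists δ₀ > 0 such that for every δ ∈ (0, δ₀], every z ∈ ℂ that does not lie on the real ray [(Im ω₀ + δ)², ∞) (i.e. it is not the case that Im z = 0 and Re z ≥ (Im ω₀ + δ)²), and every s ∈ ℝ, there is no ξ ∈ ℂ with Im ξ > 0 satisfying simultaneously (ξ² + s − ω̄₀)·(ξ² + s − ω₀) = z and (ξ² + s − (1+m)·ω̄₀)·(ξ² + s − (1+m)·ω₀) = (1+m)²·z. (This is Lemma 3 of the paper: the roots λ_{j,+} and μ_{k,+} in the upper half plane are always distinct.) -/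
/-!
Put `w = ξ² + s`, `k = 1 + m` and `a = Re ω₀`, `b = Im ω₀`. Subtracting `k²` times the first
equation from the second eliminates `z` and, as `k ≠ 1`, leaves `w ((1 + k) w - 2 a k) = 0`. Hence
`w` is one of the two real numbers `0` and `2 a k / (1 + k)`, and the first equation gives
`z = (w - a)² + b²`, a real number with `|w - a| ≥ |a m / (2 + m)| > 0`. So `z` lies on the
excluded ray as soon as `(b + δ)² ≤ b² + (a m / (2 + m))²`, which holds for small `δ`.
-/

/-- Lemma 3 of the paper: the upper-half-plane roots `λ_{j,+}` of (2.10*) and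
`μ_{k,+}` of (2.11*) are always distinct, i.e. no `ξ` with `Im ξ > 0` solves
both characteristic equations simultaneously. -/
theorem roots_distinct
    (ω₀ : ℂ) (m : ℝ)
    (hωre : 0 < ω₀.re) (hωim : 0 < ω₀.im) (hm0 : m ≠ 0) (hm1 : 0 < 1 + m) :
    ∃ δ₀ > 0, ∀ δ : ℝ, 0 < δ → δ ≤ δ₀ →
      ∀ z : ℂ, ¬(z.im = 0 ∧ (ω₀.im + δ) ^ 2 ≤ z.re) →
        ∀ s : ℝ, ¬∃ ξ : ℂ, 0 < ξ.im ∧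
          (ξ ^ 2 + (s : ℂ) - (starRingEnd ℂ) ω₀) * (ξ ^ 2 + (s : ℂ) - ω₀) = z ∧
          (ξ ^ 2 + (s : ℂ) - (1 + (m : ℂ)) * (starRingEnd ℂ) ω₀) *
            (ξ ^ 2 + (s : ℂ) - (1 + (m : ℂ)) * ω₀) = (1 + (m : ℂ)) ^ 2 * z := by
  set a := ω₀.re with ha
  set b := ω₀.im with hb
  -- `c` is the distance, up to sign, from `a` to the nonzero root `w = 2 a k / (1 + k)`.
  obtain ⟨c, hc⟩ : ∃ c : ℝ, c * (2 + m) = a * m :=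
    ⟨a * m / (2 + m), div_mul_cancel₀ _ (by linarith)⟩
  have hc0 : c ≠ 0 := by
    rintro rfl
    have : a * m ≠ 0 := mul_ne_zero hωre.ne' hm0
    exact this (by linarith)
  have hc2 : 0 < c ^ 2 := by positivity
  have hca : c ^ 2 ≤ a ^ 2 := by
    have h1 : c ^ 2 * (2 + m) ^ 2 = a ^ 2 * m ^ 2 := by
      rw [← mul_pow, hc, mul_pow]
    have h2 : m ^ 2 ≤ (2 + m) ^ 2 := by nlinarith
    have h3 : 0 < (2 + m) ^ 2 := by nlinarith
    refine le_of_mul_le_mul_right ?_ h3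
    rw [h1]
    exact mul_le_mul_of_nonneg_left h2 (sq_nonneg a)
  refine ⟨√(b ^ 2 + c ^ 2) - b, ?_, ?_⟩
  · have : b < √(b ^ 2 + c ^ 2) := Real.lt_sqrt_of_sq_lt (by linarith)
    linarith
  intro δ hδ hδ' z hz s
  rintro ⟨ξ, -, h1, h2⟩
  have hδc : (b + δ) ^ 2 ≤ b ^ 2 + c ^ 2 := by
    rw [← Real.le_sqrt (by positivity) (by positivity)]
    linarith
  generalize ξ ^ 2 + (s : ℂ) = w at h1 h2
  have hω : ω₀ = a + b * Complex.I := (Complex.re_add_im ω₀).symm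
  have hωc : (starRingEnd ℂ) ω₀ = a - b * Complex.I := by
    rw [hω]
    simp [sub_eq_add_neg]
  rw [hωc, hω] at h1 h2
  have hI := Complex.I_sq
  have hmC : (m : ℂ) ≠ 0 := by exact_mod_cast hm0
  have hkC : (2 + m : ℂ) ≠ 0 := by
    have : (2 + m : ℝ) ≠ 0 := by linarith
    exact_mod_cast this
  have hcC : (c : ℂ) * (2 + m) = a * m := by exact_mod_cast hc
  have hz1 : z = (w - a) ^ 2 + b ^ 2 := by
    rw [← h1]
    linear_combination (-(b : ℂ) ^ 2) * hI
  have hw : m * (w * ((2 + m) * w - 2 * a * (1 + m))) = 0 := by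
    linear_combination (1 + (m : ℂ)) ^ 2 * h1 - h2
  -- In both cases `w - a` is a real number `x` with `c² ≤ x²`.
  have key : ∃ x : ℝ, c ^ 2 ≤ x ^ 2 ∧ w - a = x := by
    rcases mul_eq_zero.1 ((mul_eq_zero.1 hw).resolve_left hmC) with h | h
    · exact ⟨-a, by simpa using hca, by simp [h]⟩
    · refine ⟨c, le_rfl, mul_right_cancel₀ hkC ?_⟩
      linear_combination h - hcC
  obtain ⟨x, hx, hwx⟩ := key
  have hzx : z = ((x ^ 2 + b ^ 2 : ℝ) : ℂ) := by
    rw [hz1, hwx]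
    push_cast
    rfl
  refine hz ⟨by rw [hzx, Complex.ofReal_im], ?_⟩
  rw [hzx, Complex.ofReal_re]
  linarith
end

section
/- Let ω₀ ∈ ℂ with Re ω₀ ≠ 0, let m ∈ ℝ with m ≠ 0 and m ≠ −2, and let z, p ∈ ℂ. If (p − ω̄₀)·(p − ω₀) = z and (p − (1+m)·ω̄₀)·(p − (1+m)·ω₀) = (1+m)²·z, then either z = |ω₀|² or z = (Im ω₀)² + (m²/(2+m)²)·(Re ω₀)² (in both cases z equals the indicated real number, viewed as a complex number). (This is the algebraic core of the proof of Lemma 3.) -/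
/-!
Write `ω₀ = a + b i`. The first equation reads `z = (p - a)² + b²`. Subtracting the second
equation from `(1 + m)²` times the first eliminates `z` and leaves
`m p ((2 + m) p - 2 a (1 + m)) = 0`. As `m ≠ 0`, either `p = 0`, which gives `z = a² + b²`, or
`p = 2 a (1 + m) / (2 + m)`, so that `p - a = m a / (2 + m)`, which gives the second value.
-/

/-- The algebraic core of the proof of Lemma 3 of the paper: if `p` solves both
characteristic equations, then `z = |ω₀|²` or
`z = (Im ω₀)² + (m²/(2+m)²)·(Re ω₀)²`. -/
theorem algebraic_core_lemma3
    (ω₀ : ℂ) (m : ℝ) (z p : ℂ)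
    (hωre : ω₀.re ≠ 0) (hm0 : m ≠ 0) (hm2 : m ≠ -2)
    (h1 : (p - (starRingEnd ℂ) ω₀) * (p - ω₀) = z)
    (h2 : (p - (1 + (m : ℂ)) * (starRingEnd ℂ) ω₀) * (p - (1 + (m : ℂ)) * ω₀) =
      (1 + (m : ℂ)) ^ 2 * z) :
    z = ((ω₀.re ^ 2 + ω₀.im ^ 2 : ℝ) : ℂ) ∨
      z = ((ω₀.im ^ 2 + (m ^ 2 / (2 + m) ^ 2) * ω₀.re ^ 2 : ℝ) : ℂ) := by
  obtain ⟨a, b⟩ := ω₀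
  simp only at hωre ⊢
  have hm0' : (m : ℂ) ≠ 0 := by exact_mod_cast hm0
  have hm2' : (2 + m : ℂ) ≠ 0 := by
    have : (2 + m : ℝ) ≠ 0 := fun h => hm2 (by linarith)
    exact_mod_cast this
  have hw : (⟨a, b⟩ : ℂ) = a + b * Complex.I := Complex.mk_eq_add_mul_I a b
  have hI := Complex.I_sq
  rw [hw] at h1 h2
  simp only [map_add, map_mul, Complex.conj_ofReal, Complex.conj_I] at h1 h2
  have hz : z = (p - a) ^ 2 + b ^ 2 := by
    linear_combination -h1 - (b : ℂ) ^ 2 * hI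
  -- `(1 + m)²` times the first equation minus the second eliminates `z`.
  have hfac : (m : ℂ) * (p * ((2 + m) * p - 2 * a * (1 + m))) = 0 := by
    linear_combination (1 + (m : ℂ)) ^ 2 * h1 - h2
  rcases mul_eq_zero.mp ((mul_eq_zero.mp hfac).resolve_left hm0') with hp | hp
  · left
    rw [hz, hp]
    push_cast
    ring
  · right
    have hpa : p - a = m * a / (2 + m) := by
      rw [eq_div_iff hm2']
      linear_combination hp
    rw [hz, hpa, div_pow]
    push_cast
    field_simp
    ring
end

section
/- For all complex numbers λ₁, λ₂, μ₁, μ₂, Y, m, the determinant of the 4×4 complex matrix Λ with rows (1, 1, −1, −1), (λ₁, λ₂, −μ₁, −μ₂), (−(1+m)²λ₁² + Y, −(1+m)²λ₂² + Y, −μ₁², −μ₂²), (−(1+m)²λ₁³ + λ₁Y, −(1+m)²λ₂³ + λ₂Y, −μ₁³, −μ₂³) equals −(λ₂ − λ₁)·(μ₂ − μ₁)·D(λ₁, λ₂, μ₁, μ₂, Y, m). (These are the matrix Λ and the determinant factorization det Λ = −(λ₂−λ₁)(μ₂−μ₁)·det Λ₁ computed in Section 2 of the paper.) -/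
/-- The paper's expression for `det Λ₁`. -/
def Ddet (l₁ l₂ mu₁ mu₂ Y m : ℂ) : ℂ :=
  (1 + m) ^ 2 * (mu₁ * mu₂ * (l₁ + l₂) ^ 2
      - (l₁ * l₂ + mu₁ * mu₂) * (mu₁ + mu₂) * (l₁ + l₂)
      + l₁ * l₂ * (mu₁ + mu₂) ^ 2)
    - ((1 + m) ^ 2 * l₁ * l₂ + mu₁ * mu₂) ^ 2
    + ((1 + m) ^ 2 * (l₁ ^ 2 + l₂ ^ 2) + mu₁ ^ 2 + mu₂ ^ 2) * Y - Y ^ 2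

/-- The determinant factorization `det Λ = −(λ₂−λ₁)(μ₂−μ₁)·det Λ₁`
computed in Section 2 of the paper. -/
theorem det_Lambda_factorization (l₁ l₂ mu₁ mu₂ Y m : ℂ) :
    (Matrix.of
      ![![1, 1, -1, -1],
        ![l₁, l₂, -mu₁, -mu₂],
        ![-(1 + m) ^ 2 * l₁ ^ 2 + Y, -(1 + m) ^ 2 * l₂ ^ 2 + Y, -mu₁ ^ 2, -mu₂ ^ 2],
        ![-(1 + m) ^ 2 * l₁ ^ 3 + l₁ * Y, -(1 + m) ^ 2 * l₂ ^ 3 + l₂ * Y,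
          -mu₁ ^ 3, -mu₂ ^ 3]]).det
    = -(l₂ - l₁) * (mu₂ - mu₁) * Ddet l₁ l₂ mu₁ mu₂ Y m := by
  simp [Matrix.det_succ_row_zero, Fin.sum_univ_succ, Fin.succAbove, Ddet]
  ring
end

section
/- For all complex numbers λ, μ, Y, m, the determinant of the 4×4 complex matrix Λ₂ with rows (1, 0, −1, 0), (λ, 1, −μ, −1), (−(1+m)²λ² + Y, −2(1+m)²λ, −μ², −2μ), (−(1+m)²λ³ + Yλ, −3(1+m)²λ² + Y, −μ³, −3μ²) equals ((1+m)²λ² + μ² − Y)² + 4·(1+m)²·λ·μ·(λ − μ)². (This is the determinant identity for the matrix Λ₂ computed in Section 2 of the paper, arising at the double-root value z = (Im ω₀)².) -/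
/-- The determinant identity for the matrix `Λ₂` computed in Section 2 of the
paper, arising at the double-root value `z = (Im ω₀)²`. -/
theorem det_Lambda2_identity (l mu Y m : ℂ) :
    (Matrix.of
      ![![1, 0, -1, 0],
        ![l, 1, -mu, -1],
        ![-(1 + m) ^ 2 * l ^ 2 + Y, -2 * (1 + m) ^ 2 * l, -mu ^ 2, -2 * mu],
        ![-(1 + m) ^ 2 * l ^ 3 + Y * l, -3 * (1 + m) ^ 2 * l ^ 2 + Y,
          -mu ^ 3, -3 * mu ^ 2]]).det
    = ((1 + m) ^ 2 * l ^ 2 + mu ^ 2 - Y) ^ 2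
        + 4 * (1 + m) ^ 2 * l * mu * (l - mu) ^ 2 := by
  -- Repeated Laplace expansion along the first row leaves a polynomial identity.
  simp [Matrix.det_succ_row_zero, Fin.sum_univ_succ, Fin.succAbove]
  ring
end

section
/- Let λ₁, λ₂, μ₁, μ₂, Y, m be complex numbers with λ₁ ≠ 0, λ₂ ≠ 0, μ₁ ≠ 0, μ₂ ≠ 0, λ₁ ≠ λ₂, λ₁ ≠ −λ₂, μ₁ ≠ μ₂, μ₁ ≠ −μ₂. Define r₁ = (2λ₁(λ₁−λ₂)(λ₁+λ₂))⁻¹, r₂ = (2λ₂(λ₂−λ₁)(λ₂+λ₁))⁻¹, r₃ = (2μ₁(μ₁−μ₂)(μ₁+μ₂))⁻¹, r₄ = (2μ₂(μ₂−μ₁)(μ₂+μ₁))⁻¹. Let M be the product A·B of the 4×4 matrices A with rows (r₁, r₂, −r₃, −r₄), (λ₁r₁, λ₂r₂, −μ₁r₃, −μ₂r₄), ((−(1+m)²λ₁² + Y)r₁, (−(1+m)²λ₂² + Y)r₂, −μ₁²r₃, −μ₂²r₄), ((−(1+m)²λ₁³ + Yλ₁)r₁, (−(1+m)²λ₂³ +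 Yλ₂)r₂, −μ₁³r₃, −μ₂³r₄), and B with rows (1, λ₁², 0, 0), (1, λ₂², 0, 0), (0, 0, 1, μ₁²), (0, 0, 1, μ₂²). Then det M = −D(λ₁, λ₂, μ₁, μ₂, Y, m) / (16·λ₁·λ₂·μ₁·μ₂·(λ₁+λ₂)·(μ₁+μ₂)). (This is the formula det M = −det Λ₁ / (16 λ₁λ₂μ₁μ₂(λ₁+λ₂)(μ₁+μ₂)) for the principal symbol of the boundary system in Section 3 of the paper.) -/
/-- The factor `det A`, with the column factors `r₁, r₂, -r₃, -r₄` pulled out. -/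
theorem det_A_formula (l₁ l₂ mu₁ mu₂ Y m r₁ r₂ r₃ r₄ : ℂ) :
    (Matrix.of
       ![![r₁, r₂, -r₃, -r₄],
         ![l₁ * r₁, l₂ * r₂, -mu₁ * r₃, -mu₂ * r₄],
         ![(-(1 + m) ^ 2 * l₁ ^ 2 + Y) * r₁, (-(1 + m) ^ 2 * l₂ ^ 2 + Y) * r₂,
           -mu₁ ^ 2 * r₃, -mu₂ ^ 2 * r₄],
         ![(-(1 + m) ^ 2 * l₁ ^ 3 + Y * l₁) * r₁,
           (-(1 + m) ^ 2 * l₂ ^ 3 + Y * l₂) * r₂,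
           -mu₁ ^ 3 * r₃, -mu₂ ^ 3 * r₄]] : Matrix (Fin 4) (Fin 4) ℂ).det
    = -(r₁ * r₂ * r₃ * r₄) * ((l₂ - l₁) * (mu₂ - mu₁)) * Ddet l₁ l₂ mu₁ mu₂ Y m := by
  simp [Matrix.det_succ_row_zero, Fin.sum_univ_succ, Fin.succAbove, Ddet]
  ring

theorem det_B_formula (l₁ l₂ mu₁ mu₂ : ℂ) :
    (Matrix.of
       ![![1, l₁ ^ 2, 0, 0],
         ![1, l₂ ^ 2, 0, 0],
         ![0, 0, 1, mu₁ ^ 2],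
         ![0, 0, 1, mu₂ ^ 2]] : Matrix (Fin 4) (Fin 4) ℂ).det
    = (l₂ ^ 2 - l₁ ^ 2) * (mu₂ ^ 2 - mu₁ ^ 2) := by
  simp [Matrix.det_succ_row_zero, Fin.sum_univ_succ, Fin.succAbove]
  ring

/-- The formula `det M = −det Λ₁ / (16 λ₁λ₂μ₁μ₂(λ₁+λ₂)(μ₁+μ₂))` for the
principal symbol of the boundary system in Section 3 of the paper. -/
theorem det_M_formula
    (l₁ l₂ mu₁ mu₂ Y m : ℂ)
    (hl₁ : l₁ ≠ 0) (hl₂ : l₂ ≠ 0) (hmu₁ : mu₁ ≠ 0) (hmu₂ : mu₂ ≠ 0)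
    (hl : l₁ ≠ l₂) (hl' : l₁ ≠ -l₂) (hmu : mu₁ ≠ mu₂) (hmu' : mu₁ ≠ -mu₂) :
    (let r₁ : ℂ := (2 * l₁ * (l₁ - l₂) * (l₁ + l₂))⁻¹
     let r₂ : ℂ := (2 * l₂ * (l₂ - l₁) * (l₂ + l₁))⁻¹
     let r₃ : ℂ := (2 * mu₁ * (mu₁ - mu₂) * (mu₁ + mu₂))⁻¹
     let r₄ : ℂ := (2 * mu₂ * (mu₂ - mu₁) * (mu₂ + mu₁))⁻¹
     let A : Matrix (Fin 4) (Fin 4) ℂ := Matrix.of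
       ![![r₁, r₂, -r₃, -r₄],
         ![l₁ * r₁, l₂ * r₂, -mu₁ * r₃, -mu₂ * r₄],
         ![(-(1 + m) ^ 2 * l₁ ^ 2 + Y) * r₁, (-(1 + m) ^ 2 * l₂ ^ 2 + Y) * r₂,
           -mu₁ ^ 2 * r₃, -mu₂ ^ 2 * r₄],
         ![(-(1 + m) ^ 2 * l₁ ^ 3 + Y * l₁) * r₁,
           (-(1 + m) ^ 2 * l₂ ^ 3 + Y * l₂) * r₂,
           -mu₁ ^ 3 * r₃, -mu₂ ^ 3 * r₄]]
     let B : Matrix (Fin 4) (Fin 4) ℂ := Matrix.of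
       ![![1, l₁ ^ 2, 0, 0],
         ![1, l₂ ^ 2, 0, 0],
         ![0, 0, 1, mu₁ ^ 2],
         ![0, 0, 1, mu₂ ^ 2]]
     (A * B).det)
    = -Ddet l₁ l₂ mu₁ mu₂ Y m /
        (16 * l₁ * l₂ * mu₁ * mu₂ * (l₁ + l₂) * (mu₁ + mu₂)) := by
  extract_lets r₁ r₂ r₃ r₄ A B
  rw [Matrix.det_mul, det_A_formula, det_B_formula]
  have h₁ : l₁ - l₂ ≠ 0 := sub_ne_zero.2 hl
  have h₂ : l₁ + l₂ ≠ 0 := fun h => hl' (eq_neg_of_add_eq_zero_left h)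
  have h₃ : mu₁ - mu₂ ≠ 0 := sub_ne_zero.2 hmu
  have h₄ : mu₁ + mu₂ ≠ 0 := fun h => hmu' (eq_neg_of_add_eq_zero_left h)
  -- Rewriting `r₂` and `r₄` through the same differences and sums as `r₁` and `r₃` lets
  -- `field_simp` see the common factors.
  have e₂ : r₂ = -(2 * l₂ * (l₁ - l₂) * (l₁ + l₂))⁻¹ := by
    rw [← inv_neg]; ring
  have e₄ : r₄ = -(2 * mu₂ * (mu₁ - mu₂) * (mu₁ + mu₂))⁻¹ := by
    rw [← inv_neg]; ring
  rw [e₂, e₄]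
  simp only [r₁, r₃]
  -- `Ddet` enters linearly on both sides, so it is treated as an atom.
  generalize Ddet l₁ l₂ mu₁ mu₂ Y m = D
  field_simp
  ring
end
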